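/- The algebra B(n,r) is isomorphic to the one-point extension of B(n−1,r) by the B(n−1,r)-module rad P(0), where P(0) is the indecomposable projective B(n,r)-module at vertex 0; concretely, B(n,r) ≅ ((1−e₀)B(n,r)(1−e₀))[rad P(0)] and (1−e₀)B(n,r)(1−e₀) ≅ B(n−1,r). -/

import Mathlib

open FreeAlgebra

/-- Generators of the generalized Beilinson algebra `B(n,r)`: the paths of length
zero `e_i` (`vert i`, `i = 0,…,n-1`) and the arrows `γ_s^{(i)} : i → i+1`
(`arr s i`, `s = 1,…,r`, `i = 0,…,n-2`). -/
inductive BGen (n r : ℕ) : Type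
  | vert : Fin n → BGen n r
  | arr : Fin r → Fin (n - 1) → BGen n r

variable (k : Type) [Field k] (n r : ℕ)

def srcV (i : Fin (n - 1)) : Fin n := ⟨i.val, by have := i.isLt; omega⟩
def tgtV (i : Fin (n - 1)) : Fin n := ⟨i.val + 1, by have := i.isLt; omega⟩

/-- The defining relations of `B(n,r)` as a quotient of the free algebra: the `e_i`
are orthogonal idempotents summing to `1`, the arrow `γ_s^{(i)}` runs from vertex `i`
to vertex `i+1`, and consecutive arrows satisfy the commutativity relations
`γ_s^{(i+1)} γ_t^{(i)} = γ_t^{(i+1)} γ_s^{(i)}`. -/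
inductive BRel : FreeAlgebra k (BGen n r) → FreeAlgebra k (BGen n r) → Prop
  | idem (i : Fin n) :
      BRel (ι k (BGen.vert i) * ι k (BGen.vert i)) (ι k (BGen.vert i))
  | orth (i j : Fin n) (h : i ≠ j) :
      BRel (ι k (BGen.vert i) * ι k (BGen.vert j)) 0
  | sum_one : BRel (∑ i : Fin n, ι k (BGen.vert i)) 1
  | tgt_arr (s : Fin r) (i : Fin (n - 1)) :
      BRel (ι k (BGen.vert (tgtV n i)) * ι k (BGen.arr s i)) (ι k (BGen.arr s i))
  | arr_src (s : Fin r) (i : Fin (n - 1)) :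
      BRel (ι k (BGen.arr s i) * ι k (BGen.vert (srcV n i))) (ι k (BGen.arr s i))
  | comm_rel (s t : Fin r) (i j : Fin (n - 1)) (h : (j : ℕ) = (i : ℕ) + 1) :
      BRel (ι k (BGen.arr s j) * ι k (BGen.arr t i))
           (ι k (BGen.arr t j) * ι k (BGen.arr s i))

/-- The generalized Beilinson algebra `B(n,r)`: the path algebra of the Beilinson
quiver modulo the commutativity relations, presented by generators and relations. -/
abbrev Beilinson : Type := RingQuot (BRel k n r)

/-- The idempotent `e₀ ∈ B(n,r)` at vertex `0`. -/
noncomputable def e0 (hn : 0 < n) : Beilinson k n r :=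
  RingQuot.mkAlgHom k (BRel k n r) (ι k (BGen.vert ⟨0, hn⟩))

/-- The indecomposable projective `P(0) = B(n,r)·e₀`, as a left ideal. -/
noncomputable def P0 (hn : 0 < n) : Submodule (Beilinson k n r) (Beilinson k n r) :=
  Submodule.span (Beilinson k n r) {e0 k n r hn}

/-- The Jacobson radical of `B(n,r)` (the intersection of the maximal left ideals). -/
noncomputable def radB : Submodule (Beilinson k n r) (Beilinson k n r) :=
  sInf {J | IsCoatom J}

/-- The radical `rad P(0)` of the projective `P(0)` (for the semiperfect algebra
`B(n,r)` this is `rad B(n,r) ∩ P(0)`). -/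
noncomputable def radP0 (hn : 0 < n) :
    Submodule (Beilinson k n r) (Beilinson k n r) :=
  radB k n r ⊓ P0 k n r hn

/-! The vertex `0` is a source, so every left multiple `e₀ x` is a scalar multiple `ε(x) e₀`, for
the character `ε` of the simple module at `0`. Three things follow. First, `e₀ x (1 - e₀) = 0`, so
`x ↦ x (1 - e₀)` is multiplicative with values in the corner `(1 - e₀) B (1 - e₀)`. Second, the
Peirce decomposition of `x` is `x (1 - e₀) + (x e₀ - ε(x) e₀) + ε(x) e₀`, which is the triangular
matrix form. Third, an element `m` of the middle piece `(1 - e₀) B e₀` satisfies `m b m = m e₀ b m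
= 0` for all `b`, so it lies in the radical; conversely `ε` kills the radical.

The corner is `B(n-1,r)` because deleting the vertex `0` from the generators of `B(n,r)` gives a
family satisfying the relations of `B(n-1,r)` with `1 - e₀` in place of `1`, and extending the
generators of `B(n-1,r)` by zero gives one satisfying the relations of `B(n,r)`; the induced maps
restrict to inverse bijections between `B(n-1,r)` and the corner. -/

section Radical

variable {A : Type*} [Ring A]

lemma mem_jacobson_of_mul_mul_self_eq_zero {m : A} (hm : ∀ b, m * b * m = 0) :
    m ∈ Ring.jacobson A := by
  rw [← Ideal.jacobson_bot, Ideal.mem_jacobson_iff]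
  intro b
  refine ⟨1 - b * m, ?_⟩
  have hsq : b * m * (b * m) = 0 := by rw [mul_assoc, ← mul_assoc m, hm, mul_zero]
  rw [Ideal.mem_bot, mul_assoc, sub_mul, one_mul, hsq]
  abel

lemma mem_span_singleton_iff_mul_eq_self {e : A} (he : IsIdempotentElem e) {m : A} :
    m ∈ Submodule.span A {e} ↔ m * e = m := by
  rw [Submodule.mem_span_singleton]
  refine ⟨?_, fun hm ↦ ⟨m, hm⟩⟩
  rintro ⟨a, rfl⟩
  rw [smul_eq_mul, mul_assoc, he.eq]

end Radical

section Corner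

variable {R A : Type*} [CommSemiring R] [Semiring A] [Algebra R A] {f : A}
  (hf : IsIdempotentElem f)

/-- The scalar action on the corner `f A f`, on which Mathlib has only the ring structure. -/
instance cornerSMul : SMul R hf.Corner where
  smul c x := ⟨c • x.1, by
    obtain ⟨a, ha⟩ := x.2
    exact ⟨c • a, by simp only [mul_smul_comm, smul_mul_assoc, ha]⟩⟩

/-- The inclusion of the corner `f A f` into `A` as an additive map. -/
def cornerVal : hf.Corner →+ A where
  toFun x := x.1
  map_zero' := rfl
  map_add' _ _ := rfl

/-- The corner `f A f` as an `R`-module, with structure pulled back along the inclusion. -/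
instance cornerModule : Module R hf.Corner :=
  Function.Injective.module R (cornerVal hf) Subtype.val_injective fun _ _ ↦ rfl

/-- The corner `f A f` as an `R`-algebra, with unit `f`. -/
instance cornerAlgebra : Algebra R hf.Corner :=
  Algebra.ofModule (fun c x y ↦ Subtype.ext (smul_mul_assoc c x.1 y.1))
    fun c x y ↦ Subtype.ext (mul_smul_comm c x.1 y.1)

/-- The inclusion of the corner `f A f` into `A`; it is not unital, since it sends `1` to `f`. -/
def cornerInclusion : hf.Corner →ₙₐ[R] A where
  __ := cornerVal hf
  map_smul' _ _ := rfl
  map_mul' _ _ := rfl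

end Corner

/-- The data exhibiting `A` as a one-point extension of `B` at `e`. The right ideal `e A` is `R e`,
through the character `char`; the algebra `B` is identified by `embed` with the left ideal
`A (1 - e)`, onto which `proj` is the projection `x ↦ x (1 - e)`. As `e A (1 - e) = 0`, this left
ideal is the corner `(1 - e) A (1 - e)`. -/
structure OnePointSplitting (R : Type*) {A : Type*} (B : Type*) [CommRing R] [Ring A] [Ring B]
    [Algebra R A] [Algebra R B] (e : A) where
  char : A →ₐ[R] R
  proj : A →ₐ[R] B
  embed : B →ₙₐ[R] A
  char_self : char e = 1
  self_mul : ∀ x, e * x = char x • e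
  proj_embed : ∀ b, proj (embed b) = b
  embed_proj : ∀ x, embed (proj x) = x * (1 - e)

namespace OnePointSplitting

variable {R A B : Type*} [CommRing R] [Ring A] [Ring B] [Algebra R A] [Algebra R B] {e : A}
  (S : OnePointSplitting R B e)

include S in
lemma isIdempotentElem : IsIdempotentElem e := by
  rw [IsIdempotentElem, S.self_mul, S.char_self, one_smul]

lemma embed_injective : Function.Injective S.embed :=
  Function.LeftInverse.injective S.proj_embed

lemma embed_one : S.embed 1 = 1 - e := by
  rw [← map_one S.proj, S.embed_proj, one_mul]

lemma embed_mul_self (b : B) : S.embed b * e = 0 := by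
  rw [← S.proj_embed b, S.embed_proj, mul_assoc, S.isIdempotentElem.one_sub_mul_self, mul_zero]

lemma self_mul_embed (b : B) : e * S.embed b = 0 := by
  rw [← S.proj_embed b, S.embed_proj, ← mul_assoc, S.self_mul, smul_mul_assoc,
    S.isIdempotentElem.mul_one_sub_self, smul_zero]

lemma proj_self : S.proj e = 0 := by
  rw [← S.proj_embed (S.proj e), S.embed_proj, S.isIdempotentElem.mul_one_sub_self, map_zero]

lemma char_eq_zero_of_self_mul {x : A} (hx : e * x = 0) : S.char x = 0 := by
  simpa [S.char_self] using congrArg S.char hx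

lemma range_embed : Set.range S.embed = {x | (1 - e) * x * (1 - e) = x} := by
  ext x
  constructor
  · rintro ⟨b, rfl⟩
    rw [Set.mem_ofPred_eq, ← S.embed_one, ← map_mul, ← map_mul, one_mul, mul_one]
  · intro hx
    refine ⟨S.proj x, ?_⟩
    calc S.embed (S.proj x) = (1 - e) * S.embed (S.proj x) := by
          rw [sub_mul, one_mul, S.self_mul_embed, sub_zero]
      _ = x := by rw [S.embed_proj, ← mul_assoc, hx]

/-- The Peirce component `(1 - e) A e`, which is a left ideal because `e A (1 - e) = 0`. -/
def offDiagonal : Submodule A A where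
  carrier := {m | m * e = m ∧ e * m = 0}
  zero_mem' := ⟨zero_mul e, mul_zero e⟩
  add_mem' hx hy := ⟨by rw [add_mul, hx.1, hy.1], by rw [mul_add, hx.2, hy.2, add_zero]⟩
  smul_mem' a m hm :=
    ⟨by rw [smul_eq_mul, mul_assoc, hm.1],
      by rw [smul_eq_mul, ← mul_assoc, S.self_mul, smul_mul_assoc, hm.2, smul_zero]⟩

variable {S}

lemma self_mul_of_mem {m : A} (hm : m ∈ S.offDiagonal) : e * m = 0 := hm.2

lemma mul_self_of_mem {m : A} (hm : m ∈ S.offDiagonal) : m * e = m := hm.1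

lemma char_of_mem {m : A} (hm : m ∈ S.offDiagonal) : S.char m = 0 :=
  S.char_eq_zero_of_self_mul hm.2

lemma proj_of_mem {m : A} (hm : m ∈ S.offDiagonal) : S.proj m = 0 := by
  rw [← mul_self_of_mem hm, map_mul, S.proj_self, mul_zero]

lemma mul_mul_self_of_mem {m : A} (hm : m ∈ S.offDiagonal) (b : A) : m * b * m = 0 :=
  calc m * b * m = m * (e * b * m) := by
        rw [← mul_assoc, ← mul_assoc, mul_self_of_mem hm]
    _ = 0 := by rw [S.self_mul, smul_mul_assoc, self_mul_of_mem hm, smul_zero, mul_zero]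

variable (S)

/-- The left action of `B` on `(1 - e) A e`, through the identification of `B` with the corner. -/
def action : B →ₐ[R] Module.End R S.offDiagonal :=
  AlgHom.ofLinearMap ((Algebra.lsmul R R S.offDiagonal).toLinearMap ∘ₗ (S.embed : B →ₗ[R] A))
    (by
      ext m
      change S.embed 1 * (m : A) = m
      rw [S.embed_one, sub_mul, one_mul, self_mul_of_mem m.2, sub_zero])
    (fun a b ↦ by
      ext m
      change S.embed (a * b) * (m : A) = S.embed a * (S.embed b * m)
      rw [map_mul, mul_assoc])

lemma coe_action_apply (b : B) (m : S.offDiagonal) : (S.action b m : A) = S.embed b * m := rfl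

lemma mul_self_sub_mem (x : A) : x * e - S.char x • e ∈ S.offDiagonal := by
  have he := S.isIdempotentElem.eq
  constructor
  · rw [sub_mul, mul_assoc, he, smul_mul_assoc, he]
  · rw [mul_sub, ← mul_assoc, S.self_mul, mul_smul_comm, smul_mul_assoc, he, sub_self]

/-- The projection of `A` onto `(1 - e) A e`, i.e. `x ↦ (1 - e) x e`, written with
`e x e = char x • e`. -/
def offDiagonalPart : A →ₗ[R] S.offDiagonal where
  toFun x := ⟨x * e - S.char x • e, S.mul_self_sub_mem x⟩
  map_add' x y := by
    ext
    simp only [map_add, add_mul, add_smul, Submodule.coe_add]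
    abel
  map_smul' c x := by
    ext
    simp [smul_sub, smul_smul]

lemma coe_offDiagonalPart (x : A) : (S.offDiagonalPart x : A) = x * e - S.char x • e := rfl

lemma offDiagonalPart_mul (x y : A) :
    S.offDiagonalPart (x * y) =
      S.action (S.proj x) (S.offDiagonalPart y) + S.char y • S.offDiagonalPart x := by
  have hy : (1 - e) * (S.offDiagonalPart y : A) = S.offDiagonalPart y := by
    rw [sub_mul, one_mul, self_mul_of_mem (S.offDiagonalPart y).2, sub_zero]
  ext
  calc x * y * e - S.char (x * y) • e
      = x * (y * e - S.char y • e) + S.char y • (x * e - S.char x • e) := by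
        rw [map_mul, mul_sub, smul_sub, smul_smul, mul_smul_comm, mul_assoc,
          mul_comm (S.char y)]
        abel
    _ = S.embed (S.proj x) * S.offDiagonalPart y + S.char y • S.offDiagonalPart x := by
        rw [S.embed_proj, mul_assoc, hy, coe_offDiagonalPart, coe_offDiagonalPart]

/-- The Peirce decomposition of `A`: the triple `(b, m, c)` stands for the one-point extension
matrix `[[b, m], [0, c]]`. -/
def equiv : A ≃ₗ[R] B × S.offDiagonal × R where
  __ := S.proj.toLinearMap.prod (S.offDiagonalPart.prod S.char.toLinearMap)
  invFun p := S.embed p.1 + p.2.1 + p.2.2 • e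
  left_inv x := by
    change S.embed (S.proj x) + (x * e - S.char x • e) + S.char x • e = x
    rw [S.embed_proj, mul_sub, mul_one]
    abel
  right_inv := by
    rintro ⟨b, m, c⟩
    have hproj : S.proj (S.embed b + m + c • e) = b := by
      simp [S.proj_embed, proj_of_mem m.2, S.proj_self]
    have hchar : S.char (S.embed b + m + c • e) = c := by
      simp [S.char_eq_zero_of_self_mul (S.self_mul_embed b), char_of_mem m.2, S.char_self]
    refine Prod.ext hproj (Prod.ext (Subtype.ext ?_) hchar)
    change (S.embed b + m + c • e) * e - S.char (S.embed b + m + c • e) • e = m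
    rw [hchar, add_mul, add_mul, S.embed_mul_self, mul_self_of_mem m.2, smul_mul_assoc,
      S.isIdempotentElem.eq]
    abel

lemma equiv_apply (x : A) : S.equiv x = (S.proj x, S.offDiagonalPart x, S.char x) := rfl

lemma equiv_one : S.equiv 1 = (1, 0, 1) := by
  have h : S.offDiagonalPart 1 = 0 := by
    ext
    simp [coe_offDiagonalPart]
  rw [equiv_apply, map_one S.proj, map_one S.char, h]

lemma equiv_mul (x y : A) : S.equiv (x * y) =
    ((S.equiv x).1 * (S.equiv y).1,
      S.action (S.equiv x).1 (S.equiv y).2.1 + (S.equiv y).2.2 • (S.equiv x).2.1,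
      (S.equiv x).2.2 * (S.equiv y).2.2) := by
  simp only [equiv_apply, map_mul, offDiagonalPart_mul]

lemma char_eq_zero_of_mem_jacobson (hR : Ring.jacobson R = ⊥) {x : A}
    (hx : x ∈ Ring.jacobson A) : S.char x = 0 := by
  have : RingHomSurjective (S.char : A →+* R) := ⟨fun c ↦ ⟨algebraMap R A c, S.char.commutes c⟩⟩
  simpa [hR] using Ring.le_comap_jacobson (S.char : A →+* R) hx

theorem jacobson_inf_span_eq_offDiagonal (hR : Ring.jacobson R = ⊥) :
    Ring.jacobson A ⊓ Submodule.span A {e} = S.offDiagonal := by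
  ext m
  rw [Submodule.mem_inf, mem_span_singleton_iff_mul_eq_self S.isIdempotentElem]
  constructor
  · rintro ⟨hrad, hm⟩
    exact ⟨hm, by rw [S.self_mul, S.char_eq_zero_of_mem_jacobson hR hrad, zero_smul]⟩
  · intro hm
    exact ⟨mem_jacobson_of_mul_mul_self_eq_zero (mul_mul_self_of_mem hm), mul_self_of_mem hm⟩

end OnePointSplitting

section Quiver

variable {n}

lemma tgtV_injective : Function.Injective (tgtV n) := by
  intro i j h
  have : i.val + 1 = j.val + 1 := congrArg Fin.val h
  exact Fin.ext (by lia)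

lemma tgtV_ne_zero (hn : 0 < n) (i : Fin (n - 1)) : tgtV n i ≠ ⟨0, hn⟩ :=
  fun h ↦ Nat.succ_ne_zero i.val (congrArg Fin.val h)

lemma val_eq_zero_or_exists_eq_tgtV (i : Fin n) : i.val = 0 ∨ ∃ j, i = tgtV n j := by
  obtain ⟨_ | m, hm⟩ := i
  · exact Or.inl rfl
  · exact Or.inr ⟨⟨m, by lia⟩, rfl⟩

lemma extend_tgtV_of_val_eq_zero {M : Type*} [Zero M] (g : Fin (n - 1) → M) {i : Fin n}
    (hi : i.val = 0) : Function.extend (tgtV n) g 0 i = 0 :=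
  Function.extend_apply' _ _ _ fun ⟨j, hj⟩ ↦ tgtV_ne_zero (hi ▸ i.isLt) j (hj.trans (Fin.ext hi))

lemma sum_eq_add_sum_tgtV {M : Type*} [AddCommMonoid M] (hn : 0 < n) (g : Fin n → M) :
    ∑ i, g i = g ⟨0, hn⟩ + ∑ i, g (tgtV n i) := by
  obtain ⟨m, rfl⟩ := Nat.exists_eq_succ_of_ne_zero hn.ne'
  exact Fin.sum_univ_succ g

end Quiver

/-- Elements of `A` satisfying the relations of `B(n,r)`, except that the vertex idempotents sum to
`f` instead of `1`. For `f = 1` such families correspond to algebra maps `B(n,r) → A`; for general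
`f`, to algebra maps into the corner `f A f`. -/
structure BeilinsonFamily (n r : ℕ) {A : Type*} [Ring A] (f : A) where
  vert : Fin n → A
  arr : Fin r → Fin (n - 1) → A
  orthogonal : OrthogonalIdempotents vert
  sum_vert : ∑ i, vert i = f
  vert_tgtV_mul_arr : ∀ s i, vert (tgtV n i) * arr s i = arr s i
  arr_mul_vert_srcV : ∀ s i, arr s i * vert (srcV n i) = arr s i
  arr_mul_arr_comm : ∀ s t (i j : Fin (n - 1)), (j : ℕ) = (i : ℕ) + 1 →
    arr s j * arr t i = arr t j * arr s i

namespace BeilinsonFamily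

variable {k n r} {A : Type*} [Ring A] {f : A}

lemma isIdempotentElem (F : BeilinsonFamily n r f) : IsIdempotentElem f :=
  F.sum_vert ▸ F.orthogonal.isIdempotentElem_sum

lemma vert_mul (F : BeilinsonFamily n r f) (i : Fin n) : F.vert i * f = F.vert i :=
  (congrArg (F.vert i * ·) F.sum_vert).symm.trans
    (F.orthogonal.mul_sum_of_mem (Finset.mem_univ i))

lemma mul_vert (F : BeilinsonFamily n r f) (i : Fin n) : f * F.vert i = F.vert i := by
  simp [← F.sum_vert, Finset.sum_mul, F.orthogonal.mul_eq]

lemma arr_mul (F : BeilinsonFamily n r f) (s : Fin r) (i : Fin (n - 1)) :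
    F.arr s i * f = F.arr s i := by
  rw [← F.arr_mul_vert_srcV, mul_assoc, F.vert_mul]

lemma mul_arr (F : BeilinsonFamily n r f) (s : Fin r) (i : Fin (n - 1)) :
    f * F.arr s i = F.arr s i := by
  rw [← F.vert_tgtV_mul_arr, ← mul_assoc, F.mul_vert]

lemma vert_mul_arr_of_ne (F : BeilinsonFamily n r f) {j : Fin n} {i : Fin (n - 1)} (s : Fin r)
    (h : j ≠ tgtV n i) : F.vert j * F.arr s i = 0 := by
  rw [← F.vert_tgtV_mul_arr, ← mul_assoc, F.orthogonal.ortho h, zero_mul]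

lemma arr_mul_vert_of_ne (F : BeilinsonFamily n r f) {i : Fin (n - 1)} {j : Fin n} (s : Fin r)
    (h : srcV n i ≠ j) : F.arr s i * F.vert j = 0 := by
  rw [← F.arr_mul_vert_srcV, mul_assoc, F.orthogonal.ortho h, mul_zero]

/-- The values of a family, as a function on the generators of `B(n,r)`. -/
def gen (F : BeilinsonFamily n r f) : BGen n r → A
  | .vert i => F.vert i
  | .arr s i => F.arr s i

/-- The family through which `B(n,r)` acts on its simple module at the vertex `i`. -/
def simple (i : Fin n) : BeilinsonFamily n r (1 : A) where
  vert := Pi.single i 1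
  arr := 0
  orthogonal := by
    rw [OrthogonalIdempotents.iff_mul_eq]
    intro a b
    simp only [Pi.single_apply]
    grind
  sum_vert := by simp
  vert_tgtV_mul_arr _ _ := mul_zero _
  arr_mul_vert_srcV _ _ := zero_mul _
  arr_mul_arr_comm _ _ _ _ _ := rfl

/-- The family of `B(n-1,r)` obtained by dropping the vertex `0` and the arrows leaving it. -/
def tail (hn : 0 < n) (F : BeilinsonFamily n r f) :
    BeilinsonFamily (n - 1) r (f - F.vert ⟨0, hn⟩) where
  vert i := F.vert (tgtV n i)
  arr s i := F.arr s (tgtV (n - 1) i)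
  orthogonal := F.orthogonal.embedding ⟨tgtV n, tgtV_injective⟩
  sum_vert := by rw [eq_sub_iff_add_eq', ← sum_eq_add_sum_tgtV hn, F.sum_vert]
  vert_tgtV_mul_arr s i := F.vert_tgtV_mul_arr s (tgtV (n - 1) i)
  arr_mul_vert_srcV s i := F.arr_mul_vert_srcV s (tgtV (n - 1) i)
  arr_mul_arr_comm s t i j h := F.arr_mul_arr_comm s t _ _ (congrArg (· + 1) h)

/-- The family of `B(n,r)` obtained by shifting all indices up by one and putting `0` at the new
vertex `0` and at the arrows leaving it. -/
noncomputable def extendZero (hn : 0 < n) (F : BeilinsonFamily (n - 1) r f) :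
    BeilinsonFamily n r f where
  vert := Function.extend (tgtV n) F.vert 0
  arr s := Function.extend (tgtV (n - 1)) (F.arr s) 0
  orthogonal := by
    rw [OrthogonalIdempotents.iff_mul_eq]
    intro i j
    obtain hi | ⟨i, rfl⟩ := val_eq_zero_or_exists_eq_tgtV i
    · simp [extend_tgtV_of_val_eq_zero _ hi]
    obtain hj | ⟨j, rfl⟩ := val_eq_zero_or_exists_eq_tgtV j
    · have : tgtV n i ≠ j := fun h ↦ Nat.succ_ne_zero i.val ((congrArg Fin.val h).trans hj)
      simp [extend_tgtV_of_val_eq_zero _ hj, this]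
    · simp [tgtV_injective.extend_apply, tgtV_injective.eq_iff, F.orthogonal.mul_eq]
  sum_vert := by
    simp [sum_eq_add_sum_tgtV hn, extend_tgtV_of_val_eq_zero, tgtV_injective.extend_apply,
      F.sum_vert]
  vert_tgtV_mul_arr s i := by
    obtain hi | ⟨i, rfl⟩ := val_eq_zero_or_exists_eq_tgtV i
    · rw [extend_tgtV_of_val_eq_zero _ hi, mul_zero]
    · simp only [tgtV_injective.extend_apply, F.vert_tgtV_mul_arr]
  arr_mul_vert_srcV s i := by
    obtain hi | ⟨i, rfl⟩ := val_eq_zero_or_exists_eq_tgtV i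
    · rw [extend_tgtV_of_val_eq_zero _ hi, zero_mul]
    · have : srcV n (tgtV (n - 1) i) = tgtV n (srcV (n - 1) i) := rfl
      simp only [this, tgtV_injective.extend_apply, F.arr_mul_vert_srcV]
  arr_mul_arr_comm s t i j h := by
    obtain hi | ⟨i, rfl⟩ := val_eq_zero_or_exists_eq_tgtV i
    · simp only [extend_tgtV_of_val_eq_zero _ hi, mul_zero]
    obtain hj | ⟨j, rfl⟩ := val_eq_zero_or_exists_eq_tgtV j
    · lia
    · simp only [tgtV_injective.extend_apply]
      exact F.arr_mul_arr_comm s t i j (Nat.succ_injective h)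

/-- A family summing to `f`, regarded as a unital family in the corner `f A f`. -/
def toCorner (F : BeilinsonFamily n r f) :
    BeilinsonFamily n r (1 : F.isIdempotentElem.Corner) where
  vert i := ⟨F.vert i, (Subsemigroup.mem_corner_iff F.isIdempotentElem).2
    ⟨F.mul_vert i, F.vert_mul i⟩⟩
  arr s i := ⟨F.arr s i, (Subsemigroup.mem_corner_iff F.isIdempotentElem).2
    ⟨F.mul_arr s i, F.arr_mul s i⟩⟩
  orthogonal :=
    { idem i := Subtype.ext (F.orthogonal.idem i)
      ortho _ _ h := Subtype.ext (F.orthogonal.ortho h) }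
  sum_vert := Subtype.ext <| (map_sum (cornerVal F.isIdempotentElem) _ _).trans F.sum_vert
  vert_tgtV_mul_arr s i := Subtype.ext (F.vert_tgtV_mul_arr s i)
  arr_mul_vert_srcV s i := Subtype.ext (F.arr_mul_vert_srcV s i)
  arr_mul_arr_comm s t i j h := Subtype.ext (F.arr_mul_arr_comm s t i j h)

variable [Algebra k A]

lemma lift_gen_eq_of_rel (F : BeilinsonFamily n r (1 : A)) {x y : FreeAlgebra k (BGen n r)}
    (h : BRel k n r x y) : FreeAlgebra.lift k F.gen x = FreeAlgebra.lift k F.gen y := by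
  induction h with
  | idem i => simpa [gen] using (F.orthogonal.idem i).eq
  | orth i j h => simpa [gen] using F.orthogonal.ortho h
  | sum_one => simpa [gen] using F.sum_vert
  | tgt_arr s i => simpa [gen] using F.vert_tgtV_mul_arr s i
  | arr_src s i => simpa [gen] using F.arr_mul_vert_srcV s i
  | comm_rel s t i j h => simpa [gen] using F.arr_mul_arr_comm s t i j h

/-- The algebra map out of `B(n,r)` determined by a unital family. -/
noncomputable def lift (F : BeilinsonFamily n r (1 : A)) : Beilinson k n r →ₐ[k] A :=
  RingQuot.liftAlgHom k ⟨FreeAlgebra.lift k F.gen, fun _ _ ↦ F.lift_gen_eq_of_rel⟩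

/-- The non-unital algebra map `B(n,r) → A`, with values in `f A f`, determined by a family. -/
noncomputable def liftCorner (F : BeilinsonFamily n r f) : Beilinson k n r →ₙₐ[k] A :=
  (cornerInclusion F.isIdempotentElem).comp
    (F.toCorner.lift : Beilinson k n r →ₐ[k] F.isIdempotentElem.Corner)

end BeilinsonFamily

namespace Beilinson

variable {k n r}

variable (k n r) in
/-- The universal family, consisting of the generators of `B(n,r)`. -/
noncomputable def family : BeilinsonFamily n r (1 : Beilinson k n r) where
  vert i := RingQuot.mkAlgHom k (BRel k n r) (ι k (.vert i))
  arr s i := RingQuot.mkAlgHom k (BRel k n r) (ι k (.arr s i))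
  orthogonal :=
    { idem i := by
        rw [IsIdempotentElem, ← map_mul, RingQuot.mkAlgHom_rel k (BRel.idem i)]
      ortho i j h := by
        change _ * _ = _
        rw [← map_mul, RingQuot.mkAlgHom_rel k (BRel.orth i j h), map_zero] }
  sum_vert := by rw [← map_sum, RingQuot.mkAlgHom_rel k BRel.sum_one, map_one]
  vert_tgtV_mul_arr s i := by rw [← map_mul, RingQuot.mkAlgHom_rel k (BRel.tgt_arr s i)]
  arr_mul_vert_srcV s i := by rw [← map_mul, RingQuot.mkAlgHom_rel k (BRel.arr_src s i)]
  arr_mul_arr_comm s t i j h := by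
    rw [← map_mul, ← map_mul, RingQuot.mkAlgHom_rel k (BRel.comm_rel s t i j h)]

@[elab_as_elim]
lemma induction_on {p : Beilinson k n r → Prop} (x : Beilinson k n r)
    (algebraMap : ∀ c : k, p (algebraMap k _ c)) (vert : ∀ i, p ((family k n r).vert i))
    (arr : ∀ s i, p ((family k n r).arr s i)) (mul : ∀ x y, p x → p y → p (x * y))
    (add : ∀ x y, p x → p y → p (x + y)) : p x := by
  obtain ⟨x, rfl⟩ := RingQuot.mkAlgHom_surjective k (BRel k n r) x
  induction x using FreeAlgebra.induction with
  | grade0 c => exact AlgHom.commutes (RingQuot.mkAlgHom k (BRel k n r)) c ▸ algebraMap c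
  | grade1 g =>
    cases g with
    | vert i => exact vert i
    | arr s i => exact arr s i
  | mul x y hx hy => exact map_mul (RingQuot.mkAlgHom k (BRel k n r)) x y ▸ mul _ _ hx hy
  | add x y hx hy => exact map_add (RingQuot.mkAlgHom k (BRel k n r)) x y ▸ add _ _ hx hy

section Lift

variable {A : Type*} [Ring A] [Algebra k A]

lemma lift_vert (F : BeilinsonFamily n r (1 : A)) (i : Fin n) :
    F.lift ((family k n r).vert i) = F.vert i := by
  simp [BeilinsonFamily.lift, family, BeilinsonFamily.gen]

lemma lift_arr (F : BeilinsonFamily n r (1 : A)) (s : Fin r) (i : Fin (n - 1)) :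
    F.lift ((family k n r).arr s i) = F.arr s i := by
  simp [BeilinsonFamily.lift, family, BeilinsonFamily.gen]

lemma liftCorner_vert {f : A} (F : BeilinsonFamily n r f) (i : Fin n) :
    F.liftCorner ((family k n r).vert i) = F.vert i :=
  congrArg Subtype.val (lift_vert F.toCorner i)

lemma liftCorner_arr {f : A} (F : BeilinsonFamily n r f) (s : Fin r) (i : Fin (n - 1)) :
    F.liftCorner ((family k n r).arr s i) = F.arr s i :=
  congrArg Subtype.val (lift_arr F.toCorner s i)

lemma liftCorner_one {f : A} (F : BeilinsonFamily n r f) :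
    F.liftCorner (1 : Beilinson k n r) = f :=
  congrArg Subtype.val (map_one (F.toCorner.lift (k := k)))

end Lift

section DeleteSource

variable (hn : 0 < n)

lemma e0_eq_vert : e0 k n r hn = (family k n r).vert ⟨0, hn⟩ := rfl

lemma e0_isIdempotentElem : IsIdempotentElem (e0 k n r hn) :=
  (family k n r).orthogonal.idem ⟨0, hn⟩

/-- The character by which `B(n,r)` acts on its simple module at the vertex `0`. -/
noncomputable def sourceChar : Beilinson k n r →ₐ[k] k := (BeilinsonFamily.simple ⟨0, hn⟩).lift

lemma sourceChar_e0 : sourceChar hn (e0 k n r hn) = 1 :=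
  (lift_vert _ _).trans (Pi.single_eq_same (M := fun _ : Fin n ↦ k) ⟨0, hn⟩ 1)

lemma e0_mul (x : Beilinson k n r) : e0 k n r hn * x = sourceChar hn x • e0 k n r hn := by
  induction x using induction_on with
  | algebraMap c => rw [AlgHom.commutes, ← Algebra.commutes, ← Algebra.smul_def]; rfl
  | vert i =>
    obtain rfl | hi := eq_or_ne i ⟨0, hn⟩
    · rw [← e0_eq_vert, sourceChar_e0, one_smul, (e0_isIdempotentElem hn).eq]
    · have hchar : sourceChar hn ((family k n r).vert i) = 0 :=
        (lift_vert _ _).trans (Pi.single_eq_of_ne hi _)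
      rw [hchar, zero_smul, e0_eq_vert, (family k n r).orthogonal.ortho hi.symm]
  | arr s i =>
    have hchar : sourceChar hn ((family k n r).arr s i) = 0 := lift_arr _ s i
    rw [hchar, zero_smul, e0_eq_vert,
      (family k n r).vert_mul_arr_of_ne s (tgtV_ne_zero hn i).symm]
  | mul x y hx hy => rw [← mul_assoc, hx, smul_mul_assoc, hy, smul_smul, map_mul]
  | add x y hx hy => rw [mul_add, hx, hy, map_add, add_smul]

/-- The quotient map `B(n,r) → B(n-1,r)` killing the vertex `0`; it shifts indices down by one. -/
noncomputable def deleteSource : Beilinson k n r →ₐ[k] Beilinson k (n - 1) r :=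
  ((family k (n - 1) r).extendZero hn).lift

lemma deleteSource_e0 : deleteSource hn (e0 k n r hn) = 0 :=
  (lift_vert _ _).trans (extend_tgtV_of_val_eq_zero _ rfl)

lemma deleteSource_vert_tgtV (i : Fin (n - 1)) :
    deleteSource hn ((family k n r).vert (tgtV n i)) = (family k (n - 1) r).vert i :=
  (lift_vert _ _).trans (tgtV_injective.extend_apply _ _ _)

lemma deleteSource_arr_of_val_eq_zero (s : Fin r) {i : Fin (n - 1)} (hi : i.val = 0) :
    deleteSource hn ((family k n r).arr s i) = 0 :=
  (lift_arr _ _ _).trans (extend_tgtV_of_val_eq_zero _ hi)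

lemma deleteSource_arr_tgtV (s : Fin r) (i : Fin (n - 1 - 1)) :
    deleteSource hn ((family k n r).arr s (tgtV (n - 1) i)) = (family k (n - 1) r).arr s i :=
  (lift_arr _ _ _).trans (tgtV_injective.extend_apply _ _ _)

/-- The embedding of `B(n-1,r)` as the corner `(1 - e₀) B(n,r) (1 - e₀)`; it shifts indices up
by one. -/
noncomputable def shift : Beilinson k (n - 1) r →ₙₐ[k] Beilinson k n r :=
  ((family k n r).tail hn).liftCorner

lemma shift_one : shift hn (1 : Beilinson k (n - 1) r) = 1 - e0 k n r hn :=
  liftCorner_one _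

lemma shift_vert (i : Fin (n - 1)) :
    shift hn ((family k (n - 1) r).vert i) = (family k n r).vert (tgtV n i) :=
  liftCorner_vert _ i

lemma shift_arr (s : Fin r) (i : Fin (n - 1 - 1)) :
    shift hn ((family k (n - 1) r).arr s i) = (family k n r).arr s (tgtV (n - 1) i) :=
  liftCorner_arr _ s i

lemma deleteSource_shift (x : Beilinson k (n - 1) r) : deleteSource hn (shift hn x) = x := by
  induction x using induction_on with
  | algebraMap c =>
    rw [Algebra.algebraMap_eq_smul_one, map_smul, map_smul, shift_one, map_sub, map_one,
      deleteSource_e0, sub_zero]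
  | vert i => rw [shift_vert, deleteSource_vert_tgtV]
  | arr s i => rw [shift_arr, deleteSource_arr_tgtV]
  | mul x y hx hy => rw [map_mul, map_mul, hx, hy]
  | add x y hx hy => rw [map_add, map_add, hx, hy]

lemma shift_deleteSource (x : Beilinson k n r) :
    shift hn (deleteSource hn x) = x * (1 - e0 k n r hn) := by
  induction x using induction_on with
  | algebraMap c =>
    rw [AlgHom.commutes, Algebra.algebraMap_eq_smul_one, map_smul, shift_one, ← Algebra.smul_def]
  | vert i =>
    obtain hi | ⟨i, rfl⟩ := val_eq_zero_or_exists_eq_tgtV i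
    · obtain rfl : i = ⟨0, hn⟩ := Fin.ext hi
      rw [← e0_eq_vert, deleteSource_e0, map_zero, (e0_isIdempotentElem hn).mul_one_sub_self]
    · rw [deleteSource_vert_tgtV, shift_vert, mul_sub, mul_one, e0_eq_vert,
        (family k n r).orthogonal.ortho (tgtV_ne_zero hn i), sub_zero]
  | arr s i =>
    obtain hi | ⟨i, rfl⟩ := val_eq_zero_or_exists_eq_tgtV i
    · have hsrc : srcV n i = ⟨0, hn⟩ := Fin.ext hi
      rw [deleteSource_arr_of_val_eq_zero hn s hi, map_zero, e0_eq_vert, ← hsrc, mul_sub, mul_one,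
        (family k n r).arr_mul_vert_srcV, sub_self]
    · have hsrc : srcV n (tgtV (n - 1) i) ≠ ⟨0, hn⟩ := tgtV_ne_zero hn (srcV (n - 1) i)
      rw [deleteSource_arr_tgtV, shift_arr, mul_sub, mul_one, e0_eq_vert,
        (family k n r).arr_mul_vert_of_ne s hsrc, sub_zero]
  | mul x y hx hy =>
    have hcorner : e0 k n r hn * (y * (1 - e0 k n r hn)) = 0 := by
      rw [← mul_assoc, e0_mul, smul_mul_assoc, (e0_isIdempotentElem hn).mul_one_sub_self,
        smul_zero]
    rw [map_mul, map_mul, hx, hy, mul_assoc, sub_mul, one_mul, hcorner, sub_zero, mul_assoc]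
  | add x y hx hy => rw [map_add, map_add, hx, hy, add_mul]

/-- `B(n,r)` as a one-point extension of `B(n-1,r)` at `e₀`. -/
noncomputable def onePointSplitting :
    OnePointSplitting k (Beilinson k (n - 1) r) (e0 k n r hn) where
  char := sourceChar hn
  proj := deleteSource hn
  embed := shift hn
  char_self := sourceChar_e0 hn
  self_mul := e0_mul hn
  proj_embed := deleteSource_shift hn
  embed_proj := shift_deleteSource hn

lemma radP0_eq_offDiagonal : radP0 k n r hn = (onePointSplitting hn).offDiagonal :=
  (onePointSplitting hn).jacobson_inf_span_eq_offDiagonal (IsSemisimpleRing.jacobson_eq_bot k)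

end DeleteSource

end Beilinson

theorem beilinson_one_point_extension_general {k : Type} [Field k] {n r : ℕ} (hn0 : 0 < n) :
    ∃ ψ : Beilinson k (n - 1) r →ₗ[k] Beilinson k n r,
      (∀ a b, ψ (a * b) = ψ a * ψ b) ∧
      ψ 1 = 1 - e0 k n r hn0 ∧
      Function.Injective ψ ∧
      Set.range ψ = {x | (1 - e0 k n r hn0) * x * (1 - e0 k n r hn0) = x} ∧
      ∃ ρ : Beilinson k (n - 1) r →ₐ[k] Module.End k (radP0 k n r hn0),
        (∀ (a : Beilinson k (n - 1) r) (m : radP0 k n r hn0),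
          (ρ a m : Beilinson k n r) = ψ a * (m : Beilinson k n r)) ∧
        ∃ Φ : Beilinson k n r ≃ₗ[k]
            (Beilinson k (n - 1) r × radP0 k n r hn0 × k),
          Φ 1 = (1, 0, 1) ∧
          ∀ x y, Φ (x * y) =
            ((Φ x).1 * (Φ y).1,
             ρ (Φ x).1 (Φ y).2.1 + (Φ y).2.2 • (Φ x).2.1,
             (Φ x).2.2 * (Φ y).2.2) := by
  rw [Beilinson.radP0_eq_offDiagonal]
  set S := Beilinson.onePointSplitting (k := k) (r := r) hn0
  exact ⟨S.embed, map_mul S.embed, S.embed_one, S.embed_injective, S.range_embed,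
    S.action, S.coe_action_apply, S.equiv, S.equiv_one, S.equiv_mul⟩

/-- `B(n,r)` is the one-point extension of `B(n-1,r)` by
`rad P(0)`: (i) the corner algebra `(1-e₀)B(n,r)(1-e₀)` is isomorphic to `B(n-1,r)`
(via a multiplicative `k`-linear embedding `ψ` with image the corner and `ψ(1) = 1-e₀`),
and (ii) letting `B(n-1,r)` act on `rad P(0)` through `ψ` (the algebra map
`ρ : B(n-1,r) → End_k(rad P(0))`), there is a `k`-linear bijection
`Φ : B(n,r) ≅ B(n-1,r) × rad P(0) × k` that is unital and carries the multiplication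
of `B(n,r)` to the one-point-extension matrix multiplication
`(a,m,λ)(a',m',λ') = (aa', a·m' + λ'm, λλ')`. -/
theorem beilinson_one_point_extension {k : Type} [Field k] [IsAlgClosed k] {n r : ℕ}
    (hn : 3 ≤ n) (hn0 : 0 < n) (hr : 2 ≤ r) :
    ∃ ψ : Beilinson k (n - 1) r →ₗ[k] Beilinson k n r,
      (∀ a b, ψ (a * b) = ψ a * ψ b) ∧
      ψ 1 = 1 - e0 k n r hn0 ∧
      Function.Injective ψ ∧
      Set.range ψ = {x | (1 - e0 k n r hn0) * x * (1 - e0 k n r hn0) = x} ∧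
      ∃ ρ : Beilinson k (n - 1) r →ₐ[k] Module.End k (radP0 k n r hn0),
        (∀ (a : Beilinson k (n - 1) r) (m : radP0 k n r hn0),
          (ρ a m : Beilinson k n r) = ψ a * (m : Beilinson k n r)) ∧
        ∃ Φ : Beilinson k n r ≃ₗ[k]
            (Beilinson k (n - 1) r × radP0 k n r hn0 × k),
          Φ 1 = (1, 0, 1) ∧
          ∀ x y, Φ (x * y) =
            ((Φ x).1 * (Φ y).1,
             ρ (Φ x).1 (Φ y).2.1 + (Φ y).2.2 • (Φ x).2.1,
             (Φ x).2.2 * (Φ y).2.2) :=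
  beilinson_one_point_extension_general hn0
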